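/- For all real a > 0, b > 0 and α > 0, letting q(x) = a·b·x^{a−1}·(1 − x^a)^{b−1} be the Kumaraswamy(a,b) density and p(x) = α·x^{α−1} be the Beta(α, 1) density on (0,1), the Kullback–Leibler divergence satisfies ∫₀¹ q(x)·log(q(x)/p(x)) dx = ((a − α)/a)·(−γ − ψ(b) − 1/b) + log(a·b/α) − (b − 1)/b, where γ is the Euler–Mascheroni constant and ψ(b) is the derivative of log Γ at b. With α = c/L, this is the closed-form KL term KL(q(π_l) ‖ p(π_l)) used in training beta-Bernoulli Graph DropConnect. -/

import Mathlib

open Real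

/-- The digamma function `ψ`, the derivative of `log ∘ Γ`. -/
noncomputable def digamma (x : ℝ) : ℝ := deriv (fun y => Real.log (Real.Gamma y)) x

/-- The Kumaraswamy(a, b) density `q`. -/
noncomputable def kumaraswamyPdf (a b x : ℝ) : ℝ :=
  a * b * x ^ (a - 1) * (1 - x ^ a) ^ (b - 1)

/-- The Beta(α, 1) density `p(x) = α x^{α-1}` on `(0,1)`. -/
noncomputable def betaAlphaOnePdf (α x : ℝ) : ℝ := α * x ^ (α - 1)

open MeasureTheory Set in
/-- The real Beta integrand is integrable on `(0, 1)`. -/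
lemma intervalIntegrable_beta {s r : ℝ} (hs : 0 < s) (hr : 0 < r) :
    IntervalIntegrable (fun t : ℝ => t ^ (s - 1) * (1 - t) ^ (r - 1)) volume 0 1 := by
  have h := Complex.betaIntegral_convergent (u := s) (v := r) (by simpa) (by simpa)
  rw [intervalIntegrable_iff] at h ⊢
  refine h.re.congr ((ae_restrict_iff' measurableSet_uIoc).2 (.of_forall fun t ht => ?_))
  rw [uIoc_of_le zero_le_one] at ht
  have h₁ := Complex.ofReal_cpow ht.1.le (s - 1)
  have h₂ := Complex.ofReal_cpow (sub_nonneg.2 ht.2) (r - 1)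
  push_cast at h₁ h₂
  simp [← h₁, ← h₂, ← Complex.ofReal_mul]

open MeasureTheory Set in
/-- The real Beta integral equals `Γ(s) Γ(r) / Γ(s + r)`. -/
lemma integral_rpow_mul_one_sub_rpow {s r : ℝ} (hs : 0 < s) (hr : 0 < r) :
    ∫ t in (0:ℝ)..1, t ^ (s - 1) * (1 - t) ^ (r - 1) = ProbabilityTheory.beta s r := by
  rw [ProbabilityTheory.beta_eq_betaIntegralReal s r hs hr, ← Complex.ofReal_re (∫ _ in _.._, _),
    ← intervalIntegral.integral_ofReal, Complex.betaIntegral]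
  congr 1
  refine intervalIntegral.integral_congr fun t ht => ?_
  rw [uIcc_of_le zero_le_one] at ht
  have h₁ := Complex.ofReal_cpow ht.1 (s - 1)
  have h₂ := Complex.ofReal_cpow (sub_nonneg.2 ht.2) (r - 1)
  push_cast at h₁ h₂
  simp [← h₁, ← h₂]

lemma differentiableAt_Gamma_of_pos {x : ℝ} (hx : 0 < x) : DifferentiableAt ℝ Gamma x :=
  differentiableAt_Gamma fun m => ne_of_gt (by linarith [m.cast_nonneg (α := ℝ)])

lemma digamma_eq_deriv_div {x : ℝ} (hx : 0 < x) : digamma x = deriv Gamma x / Gamma x :=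
  deriv.log (differentiableAt_Gamma_of_pos hx) (Gamma_pos_of_pos hx).ne'

lemma hasDerivAt_Gamma_digamma {x : ℝ} (hx : 0 < x) :
    HasDerivAt Gamma (Gamma x * digamma x) x := by
  rw [digamma_eq_deriv_div hx, mul_div_cancel₀ _ (Gamma_pos_of_pos hx).ne']
  exact (differentiableAt_Gamma_of_pos hx).hasDerivAt

lemma digamma_one : digamma 1 = -eulerMascheroniConstant := by
  rw [digamma_eq_deriv_div one_pos, hasDerivAt_Gamma_one.deriv, Gamma_one, div_one]

lemma digamma_add_one {x : ℝ} (hx : 0 < x) : digamma (x + 1) = digamma x + 1 / x := by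
  have hΓ := (Gamma_pos_of_pos hx).ne'
  have h₁ : HasDerivAt (fun y => Gamma (y + 1)) (Gamma (x + 1) * digamma (x + 1)) x :=
    (hasDerivAt_Gamma_digamma (add_pos hx one_pos)).comp_add_const x 1
  have h₂ : HasDerivAt (fun y => y * Gamma y) (1 * Gamma x + x * (Gamma x * digamma x)) x :=
    (hasDerivAt_id x).mul (hasDerivAt_Gamma_digamma hx)
  have h₃ := h₁.unique (h₂.congr_of_eventuallyEq <| by
    filter_upwards [eventually_gt_nhds hx] with y hy using Gamma_add_one hy.ne')
  rw [Gamma_add_one hx.ne'] at h₃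
  field_simp
  apply mul_left_cancel₀ hΓ
  linear_combination h₃

lemma hasDerivAt_beta_left {s r : ℝ} (hs : 0 < s) (hr : 0 < r) :
    HasDerivAt (fun s => ProbabilityTheory.beta s r)
      (ProbabilityTheory.beta s r * (digamma s - digamma (s + r))) s := by
  have hΓ := (Gamma_pos_of_pos (add_pos hs hr)).ne'
  have h := ((hasDerivAt_Gamma_digamma hs).mul_const (Gamma r)).div
    ((hasDerivAt_Gamma_digamma (add_pos hs hr)).comp_add_const s r) hΓ
  refine h.congr_deriv ?_
  rw [ProbabilityTheory.beta]
  field_simp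

open MeasureTheory Set Filter Topology in
/-- Differentiating the Beta integral in its first argument produces a logarithm. -/
lemma integral_rpow_mul_log_mul_one_sub_rpow {s r : ℝ} (hs : 0 < s) (hr : 0 < r) :
    IntervalIntegrable (fun t : ℝ => t ^ (s - 1) * log t * (1 - t) ^ (r - 1)) volume 0 1 ∧
    ∫ t in (0:ℝ)..1, t ^ (s - 1) * log t * (1 - t) ^ (r - 1) =
      ProbabilityTheory.beta s r * (digamma s - digamma (s + r)) := by
  have key := intervalIntegral.hasDerivAt_integral_of_dominated_loc_of_deriv_le
    (μ := volume) (a := 0) (b := 1) (x₀ := s) (s := Ioi (s / 2))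
    (F := fun s t : ℝ => t ^ (s - 1) * (1 - t) ^ (r - 1))
    (F' := fun s t : ℝ => t ^ (s - 1) * log t * (1 - t) ^ (r - 1))
    (bound := fun t : ℝ => 1 / (s / 4) * (t ^ (s / 4 - 1) * (1 - t) ^ (r - 1)))
    (Ioi_mem_nhds (by linarith))
    (.of_forall fun _ => (by fun_prop : Measurable _).aestronglyMeasurable)
    (intervalIntegrable_beta hs hr) (by fun_prop : Measurable _).aestronglyMeasurable
    (.of_forall fun t ht u hu => ?_)
    ((intervalIntegrable_beta (by positivity) hr).const_mul _)
    (.of_forall fun t ht u _ => ?_)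
  · refine ⟨key.1, key.2.unique ((hasDerivAt_beta_left hs hr).congr_of_eventuallyEq ?_)⟩
    filter_upwards [eventually_gt_nhds hs] with u hu using integral_rpow_mul_one_sub_rpow hu hr
  · rw [uIoc_of_le zero_le_one] at ht
    have hlog := (abs_log_mul_self_rpow_lt t (s / 4) ht.1 ht.2 (by positivity)).le
    have hpow : t ^ (u - 1) ≤ t ^ (s / 4) * t ^ (s / 4 - 1) := by
      rw [← rpow_add ht.1]
      exact rpow_le_rpow_of_exponent_ge ht.1 ht.2 (by linarith [mem_Ioi.1 hu])
    have h₁ : 0 ≤ t ^ (s / 4 - 1) := rpow_nonneg ht.1.le _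
    have h₂ : 0 ≤ (1 - t) ^ (r - 1) := rpow_nonneg (sub_nonneg.2 ht.2) _
    rw [abs_mul, abs_of_nonneg (rpow_nonneg ht.1.le _)] at hlog
    rw [norm_mul, norm_mul, norm_of_nonneg h₂, norm_of_nonneg (rpow_nonneg ht.1.le _),
      norm_eq_abs, ← mul_assoc]
    refine mul_le_mul_of_nonneg_right ?_ h₂
    calc t ^ (u - 1) * |log t| ≤ t ^ (s / 4) * t ^ (s / 4 - 1) * |log t| := by gcongr
      _ = |log t| * t ^ (s / 4) * t ^ (s / 4 - 1) := by ring
      _ ≤ _ := by gcongr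
  · rw [uIoc_of_le zero_le_one] at ht
    have h := ((hasDerivAt_id u).sub_const 1).const_rpow (a := t) ht.1
    refine (h.mul_const ((1 - t) ^ (r - 1))).congr_deriv ?_
    simp only [id]
    ring

open MeasureTheory Set in
/-- The substitution `t = x ^ a` on the unit interval. -/
lemma integral_comp_rpow_zero_one (g : ℝ → ℝ) {a : ℝ} (ha : 0 < a) :
    ∫ x in (0:ℝ)..1, a * x ^ (a - 1) * g (x ^ a) = ∫ t in (0:ℝ)..1, g t := by
  have h := integral_comp_rpow_Ioi ((Ioc 0 1).indicator g) ha.ne'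
  rw [setIntegral_indicator measurableSet_Ioc, inter_eq_self_of_subset_right Ioc_subset_Ioi_self]
    at h
  have h' := setIntegral_indicator (μ := volume) (s := Ioi 0)
    (measurableSet_Ioc (a := (0:ℝ)) (b := 1))
    (f := fun x => a * x ^ (a - 1) * g (x ^ a))
  rw [inter_eq_self_of_subset_right Ioc_subset_Ioi_self] at h'
  rw [intervalIntegral.integral_of_le zero_le_one, intervalIntegral.integral_of_le zero_le_one,
    ← h, ← h']
  refine setIntegral_congr_fun measurableSet_Ioi fun x hx => ?_
  have hx : 0 < x := hx
  have hiff : x ^ a ∈ Ioc (0:ℝ) 1 ↔ x ∈ Ioc (0:ℝ) 1 := by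
    simp only [mem_Ioc, rpow_pos_of_pos hx, hx, true_and]
    rw [rpow_le_one_iff_of_pos hx]
    constructor
    · rintro (⟨_, h⟩ | ⟨h, _⟩) <;> linarith
    · exact fun h => .inr ⟨h, ha.le⟩
  by_cases hx₁ : x ∈ Ioc (0:ℝ) 1
  · simp [indicator_of_mem hx₁, indicator_of_mem (hiff.2 hx₁), abs_of_pos ha]
  · simp [indicator_of_notMem hx₁, indicator_of_notMem (mt hiff.1 hx₁)]

/-- The log-likelihood ratio in terms of `log (x ^ a)` and `log (1 - x ^ a)`. -/
lemma log_kumaraswamyPdf_div_betaAlphaOnePdf {a b α x : ℝ} (ha : 0 < a) (hb : 0 < b) (hα : 0 < α)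
    (hx₀ : 0 < x) (hx₁ : x < 1) :
    log (kumaraswamyPdf a b x / betaAlphaOnePdf α x) =
      log (a * b / α) + (a - α) / a * log (x ^ a) + (b - 1) * log (1 - x ^ a) := by
  have h₁ : 0 < 1 - x ^ a := sub_pos.2 (rpow_lt_one hx₀.le hx₁ ha)
  have hxa := rpow_pos_of_pos hx₀ (a - 1)
  have hxα := rpow_pos_of_pos hx₀ (α - 1)
  have h₁b := rpow_pos_of_pos h₁ (b - 1)
  rw [kumaraswamyPdf, betaAlphaOnePdf, log_div (by positivity) (by positivity),
    log_mul (by positivity) (by positivity), log_mul (by positivity) (by positivity),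
    log_mul hα.ne' (by positivity), log_div (by positivity) hα.ne', log_rpow hx₀, log_rpow hx₀,
    log_rpow hx₀, log_rpow h₁]
  field_simp
  ring

open MeasureTheory in
/-- Closed-form KL divergence from the Kumaraswamy(a, b) variational posterior to the
Beta(α, 1) prior:
`KL = ((a-α)/a)(-γ - ψ(b) - 1/b) + log(ab/α) - (b-1)/b`. -/
theorem kumaraswamy_beta_kl (a b α : ℝ) (ha : 0 < a) (hb : 0 < b) (hα : 0 < α) :
    ∫ x in (0:ℝ)..1,
        kumaraswamyPdf a b x * Real.log (kumaraswamyPdf a b x / betaAlphaOnePdf α x)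
      = ((a - α)/a) * (-Real.eulerMascheroniConstant - digamma b - 1/b)
        + Real.log (a * b / α) - (b - 1)/b := by
  have hΓ := (Gamma_pos_of_pos hb).ne'
  have hbeta₁ : ProbabilityTheory.beta 1 b = 1 / b := by
    rw [ProbabilityTheory.beta, add_comm, Gamma_add_one hb.ne', Gamma_one]
    field_simp
  have hbeta₂ : ProbabilityTheory.beta b 1 = 1 / b := by
    rw [ProbabilityTheory.beta, Gamma_add_one hb.ne', Gamma_one]
    field_simp
  have i₀ := intervalIntegrable_beta one_pos hb
  have e₀ := integral_rpow_mul_one_sub_rpow one_pos hb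
  obtain ⟨i₁, e₁⟩ := integral_rpow_mul_log_mul_one_sub_rpow one_pos hb
  obtain ⟨i₂, e₂⟩ := integral_rpow_mul_log_mul_one_sub_rpow hb one_pos
  simp only [sub_self, rpow_zero, one_mul, mul_one] at i₀ e₀ i₁ e₁ i₂ e₂
  have i₃ := (i₂.comp_sub_left 1).symm
  have e₃ := intervalIntegral.integral_comp_sub_left (a := 0) (b := 1)
    (fun t : ℝ => t ^ (b - 1) * log t) 1
  simp only [sub_self, sub_zero] at i₃ e₃
  rw [e₂, hbeta₂, digamma_add_one hb] at e₃
  rw [hbeta₁, add_comm 1 b, digamma_add_one hb, digamma_one] at e₁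
  rw [hbeta₁] at e₀
  set g : ℝ → ℝ := fun t => b * log (a * b / α) * (1 - t) ^ (b - 1)
    + b * ((a - α) / a) * (log t * (1 - t) ^ (b - 1))
    + b * (b - 1) * ((1 - t) ^ (b - 1) * log (1 - t)) with hg
  calc _ = ∫ x in (0:ℝ)..1, a * x ^ (a - 1) * g (x ^ a) := by
        rw [intervalIntegral.integral_of_le zero_le_one,
          intervalIntegral.integral_of_le zero_le_one, integral_Ioc_eq_integral_Ioo,
          integral_Ioc_eq_integral_Ioo]
        refine setIntegral_congr_fun measurableSet_Ioo fun x hx => ?_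
        simp only [hg]
        rw [log_kumaraswamyPdf_div_betaAlphaOnePdf ha hb hα hx.1 hx.2, kumaraswamyPdf]
        ring
    _ = ∫ t in (0:ℝ)..1, g t := integral_comp_rpow_zero_one g ha
    _ = _ := by
        rw [hg, intervalIntegral.integral_add ((i₀.const_mul _).add (i₁.const_mul _))
          (i₃.const_mul _), intervalIntegral.integral_add (i₀.const_mul _) (i₁.const_mul _)]
        simp only [intervalIntegral.integral_const_mul]
        rw [e₀, e₁, e₃]
        field_simp
        ring
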